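/- Let k be a positive integer and 1 ≤ p < ∞ a real number, and equip ℝ^k with the ℓ_p norm. Let δ > 0, ℓ ∈ [0,δ]^k, and let r^{(ℓ,δ)} : ℝ^k → ℝ^k be the rounding map r^{(ℓ,δ)}_i(x) = max(⌊(x_i − ℓ_i)/δ⌋·δ + ℓ_i, 0). Let B and B' be Borel probability measures on ℝ^k supported in [0,1]^k with Lévy–Prokhorov distance π_p(B, B') ≤ ε. Then the pushforward measures satisfy π_p(r^{(ℓ,δ)}_*B, r^{(ℓ,δ)}_*B') ≤ ε + δ·k^{1/p}. -/

import Mathlib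

open scoped BigOperators
open MeasureTheory

/-- The ℓ_p norm on `Fin m → ℝ` for a real exponent `p`. -/
noncomputable def pnorm (p : ℝ) {m : ℕ} (x : Fin m → ℝ) : ℝ :=
  (∑ i, |x i| ^ p) ^ (1 / p)

/-- The open ε-thickening of a set w.r.t. the ℓ_p distance. -/
def thick (p : ℝ) {k : ℕ} (ε : ℝ) (A : Set (Fin k → ℝ)) : Set (Fin k → ℝ) :=
  {x | ∃ y ∈ A, pnorm p (x - y) < ε}

/-- The Lévy–Prokhorov distance between Borel measures on `(ℝ^k, ‖·‖_p)`. -/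
noncomputable def prokhorov (p : ℝ) {k : ℕ} (P Q : Measure (Fin k → ℝ)) : ℝ :=
  sInf {ε : ℝ | 0 < ε ∧ ∀ A : Set (Fin k → ℝ), MeasurableSet A →
    P A ≤ Q (thick p ε A) + ENNReal.ofReal ε ∧
    Q A ≤ P (thick p ε A) + ENNReal.ofReal ε}

/-- The topological support of a Borel measure. -/
def msupp {k : ℕ} (P : Measure (Fin k → ℝ)) : Set (Fin k → ℝ) :=
  {x | ∀ U : Set (Fin k → ℝ), IsOpen U → x ∈ U → P U ≠ 0}

/-- The coordinatewise rounding map `r^{(ℓ,δ)}`. -/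
noncomputable def rnd {k : ℕ} (δ : ℝ) (ℓ : Fin k → ℝ) (x : Fin k → ℝ) : Fin k → ℝ :=
  fun i => max ((⌊(x i - ℓ i) / δ⌋ : ℝ) * δ + ℓ i) 0

/-!
Rounding to a grid of mesh `δ` increases the distance between two real numbers by at most `δ`, hence
by Minkowski's inequality the `ℓ_p` distance between two points of `ℝ^k` by at most `δ k^{1/p}`. A
map that increases distances by at most `c` sends the `ε`-thickening of a preimage of `A` into the
`(ε + c)`-thickening of `A`, so the pushforward along it increases the Lévy–Prokhorov distance by at
most `c`.
-/

section Floor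

lemma abs_floor_sub_floor_lt {R : Type*} [CommRing R] [LinearOrder R] [IsStrictOrderedRing R]
    [FloorRing R] (a b : R) : |(⌊a⌋ - ⌊b⌋ : R)| < |a - b| + 1 := by
  rw [abs_sub_lt_iff]
  constructor <;>
    linarith [Int.floor_le a, Int.lt_floor_add_one a, Int.floor_le b, Int.lt_floor_add_one b,
      le_abs_self (a - b), neg_abs_le (a - b)]

lemma abs_floor_div_mul_sub_floor_div_mul_lt {K : Type*} [Field K] [LinearOrder K]
    [IsStrictOrderedRing K] [FloorRing K] {δ : K} (hδ : 0 < δ) (a b : K) :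
    |⌊a / δ⌋ * δ - ⌊b / δ⌋ * δ| < |a - b| + δ :=
  calc |⌊a / δ⌋ * δ - ⌊b / δ⌋ * δ| = |(⌊a / δ⌋ - ⌊b / δ⌋ : K)| * δ := by
        rw [← sub_mul, abs_mul, abs_of_pos hδ]
    _ < (|a / δ - b / δ| + 1) * δ := by
        gcongr
        exact abs_floor_sub_floor_lt _ _
    _ = |a - b| + δ := by
        rw [← sub_div, abs_div, abs_of_pos hδ, add_one_mul, div_mul_cancel₀ _ hδ.ne']

end Floor

section PNorm

variable {p : ℝ} {k : ℕ}

lemma pnorm_abs (x : Fin k → ℝ) : pnorm p (fun i => |x i|) = pnorm p x := by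
  simp only [pnorm, abs_abs]

lemma pnorm_le_pnorm (hp : 0 ≤ p) {x y : Fin k → ℝ} (h : ∀ i, |x i| ≤ |y i|) :
    pnorm p x ≤ pnorm p y := by
  unfold pnorm
  gcongr ?_ ^ (1 / p)
  exact Finset.sum_le_sum fun i _ => Real.rpow_le_rpow (abs_nonneg _) (h i) hp

lemma pnorm_add_le (hp : 1 ≤ p) (x y : Fin k → ℝ) : pnorm p (x + y) ≤ pnorm p x + pnorm p y :=
  Real.Lp_add_le Finset.univ x y hp

lemma pnorm_const (hp : p ≠ 0) (c : ℝ) :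
    pnorm p (fun _ : Fin k => c) = |c| * (k : ℝ) ^ (1 / p) := by
  rw [pnorm, Finset.sum_const, Finset.card_univ, Fintype.card_fin, nsmul_eq_mul,
    Real.mul_rpow (by positivity) (by positivity), one_div, Real.rpow_rpow_inv (abs_nonneg c) hp,
    mul_comm]

lemma pnorm_le_pnorm_add_of_abs_le (hp : 1 ≤ p) {c : ℝ} (hc : 0 ≤ c) {x y : Fin k → ℝ}
    (h : ∀ i, |x i| ≤ |y i| + c) : pnorm p x ≤ pnorm p y + c * (k : ℝ) ^ (1 / p) :=
  calc pnorm p x ≤ pnorm p ((fun i => |y i|) + fun _ => c) :=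
        pnorm_le_pnorm (by linarith) fun i => (h i).trans (le_abs_self _)
    _ ≤ pnorm p (fun i => |y i|) + pnorm p (fun _ : Fin k => c) := pnorm_add_le hp _ _
    _ = pnorm p y + c * (k : ℝ) ^ (1 / p) := by
        rw [pnorm_abs, pnorm_const (by linarith), abs_of_nonneg hc]

end PNorm

section Rounding

variable {k : ℕ}

lemma measurable_rnd (δ : ℝ) (ℓ : Fin k → ℝ) : Measurable (rnd δ ℓ) := by
  unfold rnd
  fun_prop

lemma abs_rnd_sub_rnd_le {δ : ℝ} (hδ : 0 < δ) (ℓ x y : Fin k → ℝ) (i : Fin k) :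
    |rnd δ ℓ x i - rnd δ ℓ y i| ≤ |x i - y i| + δ :=
  calc |rnd δ ℓ x i - rnd δ ℓ y i|
      ≤ |(⌊(x i - ℓ i) / δ⌋ * δ + ℓ i) - (⌊(y i - ℓ i) / δ⌋ * δ + ℓ i)| :=
        abs_max_sub_max_le_abs _ _ _
    _ = |⌊(x i - ℓ i) / δ⌋ * δ - ⌊(y i - ℓ i) / δ⌋ * δ| := by rw [add_sub_add_right_eq_sub]
    _ ≤ |(x i - ℓ i) - (y i - ℓ i)| + δ :=
        (abs_floor_div_mul_sub_floor_div_mul_lt hδ _ _).le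
    _ = |x i - y i| + δ := by rw [sub_sub_sub_cancel_right]

lemma pnorm_rnd_sub_rnd_le {p δ : ℝ} (hp : 1 ≤ p) (hδ : 0 < δ) (ℓ x y : Fin k → ℝ) :
    pnorm p (rnd δ ℓ x - rnd δ ℓ y) ≤ pnorm p (x - y) + δ * (k : ℝ) ^ (1 / p) :=
  pnorm_le_pnorm_add_of_abs_le hp hδ.le fun i => abs_rnd_sub_rnd_le hδ ℓ x y i

end Rounding

section Prokhorov

variable {p ε c : ℝ} {k m : ℕ} {P Q : Measure (Fin k → ℝ)} {f : (Fin k → ℝ) → Fin m → ℝ}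

lemma thick_preimage_subset (hf : ∀ x y, pnorm p (f x - f y) ≤ pnorm p (x - y) + c)
    (A : Set (Fin m → ℝ)) : thick p ε (f ⁻¹' A) ⊆ f ⁻¹' thick p (ε + c) A := by
  rintro x ⟨y, hyA, hxy⟩
  exact ⟨f y, hyA, (hf x y).trans_lt (by gcongr)⟩

/-- The one-sided `ε`-condition of the Lévy–Prokhorov distance: `prokhorov p P Q` is the infimum of
the `ε > 0` for which it holds both from `P` to `Q` and from `Q` to `P`. -/
def ThickLE (p ε : ℝ) (P Q : Measure (Fin k → ℝ)) : Prop :=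
  ∀ A, MeasurableSet A → P A ≤ Q (thick p ε A) + ENNReal.ofReal ε

lemma ThickLE.of_measureReal_univ_le [IsFiniteMeasure P] (h : P.real Set.univ ≤ ε) :
    ThickLE p ε P Q := fun A _ =>
  calc P A ≤ P Set.univ := measure_mono A.subset_univ
    _ = ENNReal.ofReal (P.real Set.univ) := by rw [ofReal_measureReal]
    _ ≤ ENNReal.ofReal ε := ENNReal.ofReal_le_ofReal h
    _ ≤ Q (thick p ε A) + ENNReal.ofReal ε := le_add_self

lemma exists_pos_thickLE (p : ℝ) (P Q : Measure (Fin k → ℝ)) [IsFiniteMeasure P]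
    [IsFiniteMeasure Q] : ∃ ε, 0 < ε ∧ ThickLE p ε P Q ∧ ThickLE p ε Q P := by
  have hP : 0 ≤ P.real Set.univ := measureReal_nonneg
  have hQ : 0 ≤ Q.real Set.univ := measureReal_nonneg
  exact ⟨P.real Set.univ + Q.real Set.univ + 1, by positivity,
    .of_measureReal_univ_le (by linarith), .of_measureReal_univ_le (by linarith)⟩

lemma ThickLE.map (h : ThickLE p ε P Q) (hfm : Measurable f) (hc : 0 ≤ c)
    (hf : ∀ x y, pnorm p (f x - f y) ≤ pnorm p (x - y) + c) :
    ThickLE p (ε + c) (P.map f) (Q.map f) := fun A hA =>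
  calc P.map f A = P (f ⁻¹' A) := Measure.map_apply hfm hA
    _ ≤ Q (thick p ε (f ⁻¹' A)) + ENNReal.ofReal ε := h _ (hfm hA)
    _ ≤ Q (f ⁻¹' thick p (ε + c) A) + ENNReal.ofReal (ε + c) := by
        gcongr
        · exact thick_preimage_subset hf A
        · exact le_add_of_nonneg_right hc
    _ ≤ Q.map f (thick p (ε + c) A) + ENNReal.ofReal (ε + c) := by
        gcongr
        exact Measure.le_map_apply hfm.aemeasurable _

lemma prokhorov_eq_sInf (p : ℝ) (P Q : Measure (Fin k → ℝ)) :
    prokhorov p P Q = sInf {ε | 0 < ε ∧ ThickLE p ε P Q ∧ ThickLE p ε Q P} := by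
  simp only [prokhorov, ThickLE, forall_and]

lemma prokhorov_le (hε : 0 < ε) (hPQ : ThickLE p ε P Q) (hQP : ThickLE p ε Q P) :
    prokhorov p P Q ≤ ε := by
  rw [prokhorov_eq_sInf]
  exact csInf_le ⟨0, fun _ h => h.1.le⟩ ⟨hε, hPQ, hQP⟩

lemma exists_thickLE_of_prokhorov_lt [IsFiniteMeasure P] [IsFiniteMeasure Q] {r : ℝ}
    (h : prokhorov p P Q < r) : ∃ ε, 0 < ε ∧ ε < r ∧ ThickLE p ε P Q ∧ ThickLE p ε Q P := by
  rw [prokhorov_eq_sInf] at h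
  obtain ⟨ε, ⟨hε, hPQ, hQP⟩, hεr⟩ := exists_lt_of_csInf_lt (exists_pos_thickLE p P Q) h
  exact ⟨ε, hε, hεr, hPQ, hQP⟩

lemma prokhorov_map_le_add [IsFiniteMeasure P] [IsFiniteMeasure Q] (hfm : Measurable f)
    (hc : 0 ≤ c) (hf : ∀ x y, pnorm p (f x - f y) ≤ pnorm p (x - y) + c) :
    prokhorov p (P.map f) (Q.map f) ≤ prokhorov p P Q + c := by
  rw [← sub_le_iff_le_add]
  refine le_of_forall_gt_imp_ge_of_dense fun r hr => ?_
  obtain ⟨ε, hε, hεr, hPQ, hQP⟩ := exists_thickLE_of_prokhorov_lt hr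
  have hle : prokhorov p (P.map f) (Q.map f) ≤ ε + c :=
    prokhorov_le (by positivity) (hPQ.map hfm hc hf) (hQP.map hfm hc hf)
  linarith

end Prokhorov

theorem stmt9_general {k : ℕ} {p : ℝ} (hp : 1 ≤ p) {δ : ℝ} (hδ : 0 < δ) (ℓ : Fin k → ℝ)
    (B B' : Measure (Fin k → ℝ)) [IsFiniteMeasure B] [IsFiniteMeasure B'] :
    prokhorov p (B.map (rnd δ ℓ)) (B'.map (rnd δ ℓ)) ≤
      prokhorov p B B' + δ * (k : ℝ) ^ (1 / p) :=
  prokhorov_map_le_add (measurable_rnd δ ℓ) (by positivity) (pnorm_rnd_sub_rnd_le hp hδ ℓ)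

/-- Proposition (roundedProkhoroveDistance): rounding increases the Prokhorov distance
by at most `δ k^{1/p}`. -/
theorem stmt9 (k : ℕ) (hk : 0 < k) (p : ℝ) (hp : 1 ≤ p) (δ : ℝ) (hδ : 0 < δ)
    (ℓ : Fin k → ℝ) (hℓ : ∀ i, ℓ i ∈ Set.Icc 0 δ)
    (B B' : Measure (Fin k → ℝ)) [IsProbabilityMeasure B] [IsProbabilityMeasure B']
    (hsB : msupp B ⊆ Set.univ.pi fun _ : Fin k => Set.Icc (0 : ℝ) 1)
    (hsB' : msupp B' ⊆ Set.univ.pi fun _ : Fin k => Set.Icc (0 : ℝ) 1)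
    (ε : ℝ) (hε : 0 ≤ ε) (hπ : prokhorov p B B' ≤ ε) :
    prokhorov p (B.map (rnd δ ℓ)) (B'.map (rnd δ ℓ)) ≤ ε + δ * (k : ℝ) ^ (1 / p) :=
  (stmt9_general hp hδ ℓ B B').trans (by gcongr)
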